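/- Let X and Y be independent exponentially distributed random variables with means m_x > 0 and m_y > 0, and let ξ, ρ, β > 0 be constants with ξ·m_x ≠ m_y. Then E[ ln( ξ·ρ·X·Y/(X + β) ) ] + E[ ln( ρ·X·Y/(Y + β) ) ] − E[ ln( ρ·(ξ·X + Y) ) ] = ln ρ + 2·ln( m_x·m_y/β ) − 4γ − exp(β/m_x)·∫_{β/m_x}^∞ (exp(−t)/t) dt − exp(β/m_y)·∫_{β/m_y}^∞ (exp(−t)/t) dt − (ξ/(ξ·m_x − m_y))·( m_x·(ln m_x − γ) − (m_y/ξ)·(ln(m_y/ξ) − γ) ), where γ is the Euler–Mascheroni constant. -/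

import Mathlib

open MeasureTheory ProbabilityTheory Real

/-!
For `X ∼ Exp(r)`, integration by parts gives `E[f X] = f 0 + r⁻¹ E[f' X]`. With `f x = log (x + d)`
this produces the exponential integral. For the logarithm of the sum of independent `X ∼ Exp(r)`
and `Y ∼ Exp(s)`, conditioning on `Y` and on `X` respectively yields
`E[log (X + Y)] = E[log Y] + r⁻¹ E[1 / (X + Y)] = E[log X] + s⁻¹ E[1 / (X + Y)]`,
and eliminating `E[1 / (X + Y)]` gives the closed form when `r ≠ s`.
-/

section ExponentialLaw

lemma expMeasure_eq_withDensity_restrict_Ioi (r : ℝ) :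
    expMeasure r = (volume.restrict (Set.Ioi 0)).withDensity
      fun x ↦ ENNReal.ofReal (r * exp (-(r * x))) := by
  have expMeasure_def : expMeasure r = volume.withDensity (exponentialPDF r) := rfl
  rw [expMeasure_def, Measure.restrict_congr_set Ioi_ae_eq_Ici,
    ← withDensity_indicator measurableSet_Ici]
  congr 1 with x
  by_cases hx : 0 ≤ x <;> simp [exponentialPDF_eq, hx]

lemma ae_pos_expMeasure (r : ℝ) : ∀ᵐ x ∂expMeasure r, 0 < x := by
  rw [expMeasure_eq_withDensity_restrict_Ioi]
  exact (withDensity_absolutelyContinuous _ _).ae_le (ae_restrict_mem measurableSet_Ioi)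

lemma ae_pos_prod_expMeasure (r s : ℝ) :
    ∀ᵐ p ∂(expMeasure r).prod (expMeasure s), 0 < p.1 ∧ 0 < p.2 :=
  (Measure.quasiMeasurePreserving_fst.ae (ae_pos_expMeasure r)).and
    (Measure.quasiMeasurePreserving_snd.ae (ae_pos_expMeasure s))

variable {E : Type*} [NormedAddCommGroup E] [NormedSpace ℝ E] {r : ℝ}

lemma integral_expMeasure (hr : 0 < r) (f : ℝ → E) :
    ∫ x, f x ∂expMeasure r = ∫ x in Set.Ioi 0, (r * exp (-(r * x))) • f x := by
  rw [expMeasure_eq_withDensity_restrict_Ioi,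
    integral_withDensity_eq_integral_toReal_smul (by fun_prop) (by simp)]
  refine integral_congr_ae (.of_forall fun x ↦ ?_)
  simp only [ENNReal.toReal_ofReal (by positivity : 0 ≤ r * exp (-(r * x)))]

lemma integrable_expMeasure_iff (hr : 0 < r) {f : ℝ → E} :
    Integrable f (expMeasure r) ↔
      IntegrableOn (fun x ↦ (r * exp (-(r * x))) • f x) (Set.Ioi 0) := by
  rw [expMeasure_eq_withDensity_restrict_Ioi,
    integrable_withDensity_iff_integrable_smul' (by fun_prop) (by simp), IntegrableOn]
  refine integrable_congr (.of_forall fun x ↦ ?_)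
  simp only [ENNReal.toReal_ofReal (by positivity : 0 ≤ r * exp (-(r * x)))]

lemma integral_expMeasure_eq_add_integral_deriv [CompleteSpace E] (hr : 0 < r) {f f' : ℝ → E}
    (hcont : ContinuousWithinAt f (Set.Ici 0) 0) (hderiv : ∀ x ∈ Set.Ioi 0, HasDerivAt f (f' x) x)
    (hf : Integrable f (expMeasure r)) (hf' : Integrable f' (expMeasure r)) :
    ∫ x, f x ∂expMeasure r = f 0 + r⁻¹ • ∫ x, f' x ∂expMeasure r := by
  have h_deriv : ∀ x ∈ Set.Ioi 0, HasDerivAt (fun x ↦ -exp (-(r * x)) • f x)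
      ((r * exp (-(r * x))) • (f x - r⁻¹ • f' x)) x := by
    intro x hx
    convert! hasDerivAt_neg_exp_mul_exp.smul (hderiv x hx) using 1
    rw [smul_sub, smul_smul, mul_right_comm, mul_inv_cancel₀ hr.ne']
    module
  have h_int := (integrable_expMeasure_iff hr).1 (hf.sub (hf'.smul r⁻¹))
  have h_int_primitive : IntegrableOn (fun x ↦ -exp (-(r * x)) • f x) (Set.Ioi 0) := by
    refine (((integrable_expMeasure_iff hr).1 hf).smul (-r⁻¹)).congr (.of_forall fun x ↦ ?_)
    simp only [Pi.smul_apply, smul_smul, neg_mul, inv_mul_cancel_left₀ hr.ne']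
  have h_lim := tendsto_zero_of_hasDerivAt_of_integrableOn_Ioi h_deriv h_int h_int_primitive
  have h_ftc := integral_Ioi_of_hasDerivAt_of_tendsto
    (ContinuousWithinAt.smul (by fun_prop) hcont) h_deriv h_int h_lim
  rw [← integral_expMeasure hr, integral_sub hf (hf'.fun_smul r⁻¹), integral_smul] at h_ftc
  simpa [sub_eq_iff_eq_add] using h_ftc

lemma map_mul_left_expMeasure {c : ℝ} (hr : 0 < r) (hc : 0 < c) :
    (expMeasure r).map (c * ·) = expMeasure (r / c) := by
  have := isProbabilityMeasure_expMeasure hr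
  have := isProbabilityMeasure_expMeasure (div_pos hr hc)
  have hmeas : Measurable (c * · : ℝ → ℝ) := by fun_prop
  have := Measure.isProbabilityMeasure_map (μ := expMeasure r) hmeas.aemeasurable
  refine Measure.eq_of_cdf _ _ (StieltjesFunction.ext fun x ↦ ?_)
  rw [cdf_eq_real, map_measureReal_apply hmeas measurableSet_Iic, Set.preimage_const_mul_Iic₀ _ hc,
    ← cdf_eq_real, cdf_expMeasure_eq hr, cdf_expMeasure_eq (div_pos hr hc)]
  simp only [le_div_iff₀ hc, zero_mul, mul_div_assoc', div_mul_eq_mul_div]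

end ExponentialLaw

section Integrability

variable {r s : ℝ}

lemma integrable_rpow_expMeasure (hr : 0 < r) {a : ℝ} (ha : -1 < a) :
    Integrable (fun x ↦ x ^ a) (expMeasure r) := by
  rw [integrable_expMeasure_iff hr]
  refine ((integrableOn_rpow_mul_exp_neg_mul_rpow ha one_pos hr).const_mul r).congr
    (.of_forall fun x ↦ ?_)
  simp only [rpow_one, smul_eq_mul, neg_mul]
  ring

lemma integrable_id_expMeasure (hr : 0 < r) : Integrable (fun x ↦ x) (expMeasure r) := by
  simpa only [rpow_one] using integrable_rpow_expMeasure hr (a := 1) (by norm_num)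

lemma integrable_log_expMeasure (hr : 0 < r) : Integrable log (expMeasure r) := by
  refine ((integrable_id_expMeasure hr).add
    ((integrable_rpow_expMeasure hr (a := -(1 / 2)) (by norm_num)).const_mul 2)).mono'
    (by fun_prop) ?_
  filter_upwards [ae_pos_expMeasure r] with x hx
  have upper : log x ≤ x := log_le_self hx.le
  have lower : -log x ≤ 2 * x ^ (-(1 / 2) : ℝ) := by
    have := log_le_rpow_div (inv_nonneg.2 hx.le) (ε := 1 / 2) (by norm_num)
    rw [log_inv, inv_rpow hx.le, ← rpow_neg hx.le] at this
    linarith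
  have : 0 ≤ x ^ (-(1 / 2) : ℝ) := by positivity
  simp only [norm_eq_abs, Pi.add_apply]
  exact abs_le.2 ⟨by linarith, by linarith⟩

lemma abs_log_add_le {x y : ℝ} (hx : 0 ≤ x) (hy : 0 < y) : |log (x + y)| ≤ x + y + |log y| := by
  have upper : log (x + y) ≤ x + y := log_le_self (by positivity)
  have lower : log y ≤ log (x + y) := log_le_log hy (by linarith)
  exact abs_le.2 ⟨by linarith [neg_abs_le (log y)], by linarith [abs_nonneg (log y)]⟩

lemma integrable_log_add_const_expMeasure (hr : 0 < r) {d : ℝ} (hd : 0 < d) :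
    Integrable (fun x ↦ log (x + d)) (expMeasure r) := by
  have := isProbabilityMeasure_expMeasure hr
  refine (((integrable_id_expMeasure hr).add (integrable_const d)).add
    (integrable_const |log d|)).mono' (Measurable.aestronglyMeasurable (by fun_prop)) ?_
  filter_upwards [ae_pos_expMeasure r] with x hx
  exact abs_log_add_le hx.le hd

lemma integrable_inv_add_const_expMeasure (hr : 0 < r) {d : ℝ} (hd : 0 < d) :
    Integrable (fun x ↦ (x + d)⁻¹) (expMeasure r) := by
  have := isProbabilityMeasure_expMeasure hr
  refine (integrable_const d⁻¹).mono' (by fun_prop) ?_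
  filter_upwards [ae_pos_expMeasure r] with x hx
  rw [norm_of_nonneg (by positivity)]
  exact inv_anti₀ hd (by linarith)

lemma integrable_log_add_prod_expMeasure (hr : 0 < r) (hs : 0 < s) :
    Integrable (fun p : ℝ × ℝ ↦ log (p.1 + p.2)) ((expMeasure r).prod (expMeasure s)) := by
  have := isProbabilityMeasure_expMeasure hr
  have := isProbabilityMeasure_expMeasure hs
  refine ((((integrable_id_expMeasure hr).comp_fst _).add
    ((integrable_id_expMeasure hs).comp_snd _)).add
    ((integrable_log_expMeasure hs).abs.comp_snd _)).mono'
    (Measurable.aestronglyMeasurable (by fun_prop)) ?_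
  filter_upwards [ae_pos_prod_expMeasure r s] with p ⟨hp₁, hp₂⟩
  exact abs_log_add_le hp₁.le hp₂

lemma inv_add_le_rpow_mul_rpow {x y : ℝ} (hx : 0 < x) (hy : 0 < y) :
    (x + y)⁻¹ ≤ x ^ (-(1 / 2) : ℝ) * y ^ (-(1 / 2) : ℝ) := by
  rw [← mul_rpow hx.le hy.le, rpow_neg (by positivity), ← sqrt_eq_rpow]
  refine inv_anti₀ (by positivity) (sqrt_le_left (by positivity) |>.2 ?_)
  nlinarith [mul_pos hx hy]

lemma integrable_inv_add_prod_expMeasure (hr : 0 < r) (hs : 0 < s) :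
    Integrable (fun p : ℝ × ℝ ↦ (p.1 + p.2)⁻¹) ((expMeasure r).prod (expMeasure s)) := by
  have := isProbabilityMeasure_expMeasure hr
  have := isProbabilityMeasure_expMeasure hs
  refine ((integrable_rpow_expMeasure hr (a := -(1 / 2)) (by norm_num)).mul_prod
    (integrable_rpow_expMeasure hs (a := -(1 / 2)) (by norm_num))).mono' (by fun_prop) ?_
  filter_upwards [ae_pos_prod_expMeasure r s] with p ⟨hp₁, hp₂⟩
  rw [norm_of_nonneg (by positivity)]
  exact inv_add_le_rpow_mul_rpow hp₁ hp₂

end Integrability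

section LogExpectations

variable {r s : ℝ}

lemma integral_exp_neg_mul_log :
    ∫ t in Set.Ioi 0, exp (-t) * log t = -eulerMascheroniConstant := by
  have h_Gamma : Complex.GammaIntegral =ᶠ[nhds 1] Complex.Gamma := by
    filter_upwards [(isOpen_lt continuous_const Complex.continuous_re).mem_nhds
      (by simp : (0 : ℝ) < (1 : ℂ).re)] with s hs
    exact (Complex.Gamma_eq_integral hs).symm
  have h_deriv := (Complex.hasDerivAt_GammaIntegral (s := 1) (by simp)).unique
    (Complex.hasDerivAt_Gamma_one.congr_of_eventuallyEq h_Gamma)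
  simp only [sub_self, Complex.cpow_zero, one_mul, ← Complex.ofReal_mul,
    integral_complex_ofReal] at h_deriv
  simp only [mul_comm (exp _)]
  exact_mod_cast h_deriv

lemma integral_log_expMeasure (hr : 0 < r) :
    ∫ x, log x ∂expMeasure r = -log r - eulerMascheroniConstant := by
  have := isProbabilityMeasure_expMeasure one_pos
  have standard : ∫ x, log x ∂expMeasure 1 = -eulerMascheroniConstant := by
    simp only [integral_expMeasure one_pos, one_mul, smul_eq_mul, integral_exp_neg_mul_log]
  calc ∫ x, log x ∂expMeasure r
      = ∫ x, log (r⁻¹ * x) ∂expMeasure 1 := by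
        rw [← integral_map (φ := (r⁻¹ * ·)) (by fun_prop) (by fun_prop),
          map_mul_left_expMeasure one_pos (inv_pos.2 hr), one_div, inv_inv]
    _ = ∫ x, (-log r + log x) ∂expMeasure 1 := by
        refine integral_congr_ae ?_
        filter_upwards [ae_pos_expMeasure 1] with x hx
        rw [log_mul (inv_ne_zero hr.ne') hx.ne', log_inv]
    _ = -log r - eulerMascheroniConstant := by
        rw [integral_add (integrable_const _) (integrable_log_expMeasure one_pos), standard]
        simp [sub_eq_add_neg]

lemma integral_log_add_const_expMeasure (hr : 0 < r) {d : ℝ} (hd : 0 < d) :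
    ∫ x, log (x + d) ∂expMeasure r = log d + r⁻¹ * ∫ x, (x + d)⁻¹ ∂expMeasure r := by
  have h_deriv : ∀ x ∈ Set.Ici 0, HasDerivAt (fun x ↦ log (x + d)) (x + d)⁻¹ x := by
    intro x (hx : 0 ≤ x)
    simpa using ((hasDerivAt_id x).add_const d).log (by positivity : x + d ≠ 0)
  simpa using integral_expMeasure_eq_add_integral_deriv hr
    (h_deriv 0 Set.self_mem_Ici).continuousAt.continuousWithinAt
    (fun x hx ↦ h_deriv x (Set.Ioi_subset_Ici_self hx))
    (integrable_log_add_const_expMeasure hr hd) (integrable_inv_add_const_expMeasure hr hd)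

lemma integral_inv_add_const_expMeasure (hr : 0 < r) (d : ℝ) :
    ∫ x, (x + d)⁻¹ ∂expMeasure r
      = r * (exp (d * r) * ∫ t in Set.Ioi (d * r), exp (-t) / t) := by
  have h_shift : ∫ x in Set.Ioi d, exp (-(x * r)) / (x * r)
      = ∫ x in Set.Ioi 0, exp (-((x + d) * r)) / ((x + d) * r) := by
    simpa using ((measurePreserving_add_right volume d).setIntegral_preimage_emb
      (measurableEmbedding_addRight d) (fun x ↦ exp (-(x * r)) / (x * r)) (Set.Ioi d)).symm
  rw [integral_expMeasure hr, ← integral_comp_mul_right_Ioi' _ d hr, h_shift, smul_eq_mul]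
  simp only [← integral_const_mul]
  congr 1 with x
  rw [add_mul, neg_add, exp_add, exp_neg (d * r), ← add_mul, div_eq_mul_inv _ ((x + d) * r),
    mul_inv, smul_eq_mul, mul_comm x r]
  field_simp

lemma integral_log_add_prod_expMeasure_eq_add (hr : 0 < r) (hs : 0 < s) :
    ∫ p, log (p.1 + p.2) ∂(expMeasure r).prod (expMeasure s)
      = ∫ y, log y ∂expMeasure s
        + r⁻¹ * ∫ p, (p.1 + p.2)⁻¹ ∂(expMeasure r).prod (expMeasure s) := by
  have := isProbabilityMeasure_expMeasure hr
  have := isProbabilityMeasure_expMeasure hs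
  have h_inv := integrable_inv_add_prod_expMeasure hr hs
  rw [integral_prod_symm _ (integrable_log_add_prod_expMeasure hr hs), integral_prod_symm _ h_inv,
    ← integral_const_mul,
    ← integral_add (integrable_log_expMeasure hs) (h_inv.integral_prod_right.const_mul _)]
  refine integral_congr_ae ?_
  filter_upwards [ae_pos_expMeasure s] with y hy
  exact integral_log_add_const_expMeasure hr hy

lemma integral_log_add_prod_expMeasure (hr : 0 < r) (hs : 0 < s) (hrs : r ≠ s) :
    ∫ p, log (p.1 + p.2) ∂(expMeasure r).prod (expMeasure s)
      = (r⁻¹ * ∫ x, log x ∂expMeasure r - s⁻¹ * ∫ y, log y ∂expMeasure s) / (r⁻¹ - s⁻¹) := by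
  have := isProbabilityMeasure_expMeasure hr
  have := isProbabilityMeasure_expMeasure hs
  have cond_snd := integral_log_add_prod_expMeasure_eq_add hr hs
  have cond_fst := integral_log_add_prod_expMeasure_eq_add hs hr
  rw [← integral_prod_swap, ← integral_prod_swap (fun p : ℝ × ℝ ↦ (p.1 + p.2)⁻¹)] at cond_fst
  simp only [Prod.fst_swap, Prod.snd_swap, add_comm (Prod.snd _)] at cond_fst
  rw [eq_div_iff (sub_ne_zero.2 (inv_injective.ne hrs))]
  linear_combination r⁻¹ * cond_fst - s⁻¹ * cond_snd

end LogExpectations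

section RandomVariables

variable {Ω : Type*} [MeasurableSpace Ω] {μ : Measure Ω} {X Y : Ω → ℝ} {a b : ℝ}

lemma integrable_comp_of_hasLaw {𝓧 E : Type*} [MeasurableSpace 𝓧] [NormedAddCommGroup E]
    {ν : Measure 𝓧} {Z : Ω → 𝓧} (hZ : HasLaw Z ν μ) {f : 𝓧 → E} (hf : Integrable f ν) :
    Integrable (fun ω ↦ f (Z ω)) μ :=
  (hZ.map_eq ▸ hf).comp_aemeasurable hZ.aemeasurable

lemma ae_pos_of_hasLaw_exp {r : ℝ} (hX : HasLaw X (expMeasure r) μ) : ∀ᵐ ω ∂μ, 0 < X ω :=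
  (hX.ae_iff (by fun_prop)).2 (ae_pos_expMeasure r)

lemma integral_log_of_hasLaw_exp (ha : 0 < a) (hX : HasLaw X (expMeasure (1 / a)) μ) :
    ∫ ω, log (X ω) ∂μ = log a - eulerMascheroniConstant := by
  have := hX.integral_comp (f := log) (by fun_prop)
  simpa [integral_log_expMeasure (inv_pos.2 ha)] using this

lemma integral_log_add_const_of_hasLaw_exp {β : ℝ} (ha : 0 < a) (hβ : 0 < β)
    (hX : HasLaw X (expMeasure (1 / a)) μ) :
    ∫ ω, log (X ω + β) ∂μ
      = log β + exp (β / a) * ∫ t in Set.Ioi (β / a), exp (-t) / t := by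
  have ha' : 0 < 1 / a := by positivity
  rw [← mul_one_div β a, ← inv_mul_cancel_left₀ ha'.ne' (exp _ * _),
    ← integral_inv_add_const_expMeasure ha', ← integral_log_add_const_expMeasure ha' hβ]
  exact hX.integral_comp (f := fun x ↦ log (x + β))
    (Measurable.aestronglyMeasurable (by fun_prop))

lemma integral_log_mul_mul_div_add_of_hasLaw_exp [IsProbabilityMeasure μ] {c β : ℝ}
    (hc : 0 < c) (ha : 0 < a) (hb : 0 < b) (hβ : 0 < β)
    (hX : HasLaw X (expMeasure (1 / a)) μ) (hY : HasLaw Y (expMeasure (1 / b)) μ) :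
    ∫ ω, log (c * X ω * Y ω / (X ω + β)) ∂μ
      = log c + log (a * b / β) - 2 * eulerMascheroniConstant
        - exp (β / a) * ∫ t in Set.Ioi (β / a), exp (-t) / t := by
  have ha' : 0 < 1 / a := by positivity
  have h_logX := integrable_comp_of_hasLaw hX (integrable_log_expMeasure ha')
  have h_logY := integrable_comp_of_hasLaw hY (integrable_log_expMeasure (one_div_pos.2 hb))
  have h_logXβ := integrable_comp_of_hasLaw hX (integrable_log_add_const_expMeasure ha' hβ)
  have h_log : (fun ω ↦ log (c * X ω * Y ω / (X ω + β)))
      =ᵐ[μ] fun ω ↦ log c + log (X ω) + log (Y ω) - log (X ω + β) := by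
    filter_upwards [ae_pos_of_hasLaw_exp hX, ae_pos_of_hasLaw_exp hY] with ω hXω hYω
    rw [log_div (by positivity) (by positivity), log_mul (by positivity) hYω.ne',
      log_mul hc.ne' hXω.ne']
  rw [integral_congr_ae h_log, integral_sub (by fun_prop) h_logXβ,
    integral_add (by fun_prop) h_logY, integral_add (by fun_prop) h_logX,
    integral_log_of_hasLaw_exp ha hX,
    integral_log_of_hasLaw_exp hb hY, integral_log_add_const_of_hasLaw_exp ha hβ hX,
    log_div (by positivity) hβ.ne', log_mul ha.ne' hb.ne']
  simp only [integral_const, probReal_univ, one_smul]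
  ring

lemma integral_log_add_of_indepFun_exp [IsProbabilityMeasure μ] (ha : 0 < a) (hb : 0 < b)
    (hab : a ≠ b) (hX : HasLaw X (expMeasure (1 / a)) μ) (hY : HasLaw Y (expMeasure (1 / b)) μ)
    (hXY : IndepFun X Y μ) :
    ∫ ω, log (X ω + Y ω) ∂μ
      = (a * (log a - eulerMascheroniConstant) - b * (log b - eulerMascheroniConstant))
        / (a - b) := by
  have hlaw := (indepFun_iff_hasLaw_prodMk_prod hX hY).1 hXY
  have ha' : 0 < 1 / a := by positivity
  have hb' : 0 < 1 / b := by positivity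
  have h_int := hlaw.integral_comp (f := fun p ↦ log (p.1 + p.2))
    (Measurable.aestronglyMeasurable (by fun_prop))
  rw [integral_log_add_prod_expMeasure ha' hb' (by simpa using hab), integral_log_expMeasure ha',
    integral_log_expMeasure hb'] at h_int
  simpa using h_int

lemma hasLaw_const_mul_exp {c : ℝ} (ha : 0 < a) (hc : 0 < c)
    (hX : HasLaw X (expMeasure (1 / a)) μ) :
    HasLaw (fun ω ↦ c * X ω) (expMeasure (1 / (c * a))) μ := by
  have hscale : HasLaw (c * ·) (expMeasure (1 / (c * a))) (expMeasure (1 / a)) :=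
    ⟨by fun_prop, by rw [map_mul_left_expMeasure (one_div_pos.2 ha) hc, div_div, mul_comm a]⟩
  exact hscale.fun_comp hX

lemma integral_log_mul_linear_of_indepFun_exp [IsProbabilityMeasure μ] {ξ ρ : ℝ}
    (hξ : 0 < ξ) (hρ : 0 < ρ) (ha : 0 < a) (hb : 0 < b) (hab : ξ * a ≠ b)
    (hX : HasLaw X (expMeasure (1 / a)) μ) (hY : HasLaw Y (expMeasure (1 / b)) μ)
    (hXY : IndepFun X Y μ) :
    ∫ ω, log (ρ * (ξ * X ω + Y ω)) ∂μ
      = log (ξ * ρ) + ξ / (ξ * a - b)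
        * (a * (log a - eulerMascheroniConstant)
          - b / ξ * (log (b / ξ) - eulerMascheroniConstant)) := by
  have hξX := hasLaw_const_mul_exp ha hξ hX
  have hξXY : IndepFun (fun ω ↦ ξ * X ω) Y μ := hXY.comp (measurable_const_mul ξ) measurable_id
  have hξa : 0 < ξ * a := by positivity
  have h_int := integrable_comp_of_hasLaw ((indepFun_iff_hasLaw_prodMk_prod hξX hY).1 hξXY)
    (integrable_log_add_prod_expMeasure (one_div_pos.2 hξa) (one_div_pos.2 hb))
  have h_log : (fun ω ↦ log (ρ * (ξ * X ω + Y ω)))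
      =ᵐ[μ] fun ω ↦ log ρ + log (ξ * X ω + Y ω) := by
    filter_upwards [ae_pos_of_hasLaw_exp hX, ae_pos_of_hasLaw_exp hY] with ω hXω hYω
    rw [log_mul hρ.ne' (by positivity)]
  rw [integral_congr_ae h_log, integral_add (integrable_const _) h_int,
    integral_log_add_of_indepFun_exp hξa hb hab hξX hY hξXY, log_mul hξ.ne' ha.ne',
    log_mul hξ.ne' hρ.ne', log_div hb.ne' hξ.ne']
  have hsub : ξ * a - b ≠ 0 := sub_ne_zero.2 hab
  simp only [integral_const, probReal_univ, one_smul]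
  field_simp
  ring

end RandomVariables

/-- Closed form of the high-SNR asymptotic ergodic secrecy sum rate (without jamming):
for independent exponential `X`, `Y` with means `m_x`, `m_y` and constants
`ξ, ρ, β > 0` with `ξ·m_x ≠ m_y`,
`E[ln(ξρXY/(X+β))] + E[ln(ρXY/(Y+β))] - E[ln(ρ(ξX+Y))]
  = ln ρ + 2·ln(m_x·m_y/β) - 4γ - exp(β/m_x)·∫_{β/m_x}^∞ exp(-t)/t dt
    - exp(β/m_y)·∫_{β/m_y}^∞ exp(-t)/t dt
    - (ξ/(ξ·m_x - m_y))·(m_x·(ln m_x - γ) - (m_y/ξ)·(ln(m_y/ξ) - γ))`. -/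
theorem asymptotic_essr_without_jamming
    {Ω : Type*} [MeasurableSpace Ω] (μ : Measure Ω) [IsProbabilityMeasure μ]
    (X Y : Ω → ℝ) (mx my ξ ρ β : ℝ)
    (hmx : 0 < mx) (hmy : 0 < my) (hξ : 0 < ξ) (hρ : 0 < ρ) (hβ : 0 < β)
    (hne : ξ * mx ≠ my)
    (hXm : Measurable X) (hYm : Measurable Y)
    (hX : Measure.map X μ = expMeasure (1 / mx))
    (hY : Measure.map Y μ = expMeasure (1 / my))
    (hindep : IndepFun X Y μ) :
    (∫ ω, Real.log (ξ * ρ * X ω * Y ω / (X ω + β)) ∂μ)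
      + (∫ ω, Real.log (ρ * X ω * Y ω / (Y ω + β)) ∂μ)
      - (∫ ω, Real.log (ρ * (ξ * X ω + Y ω)) ∂μ)
    = Real.log ρ + 2 * Real.log (mx * my / β) - 4 * Real.eulerMascheroniConstant
      - Real.exp (β / mx) * (∫ t in Set.Ioi (β / mx), Real.exp (-t) / t)
      - Real.exp (β / my) * (∫ t in Set.Ioi (β / my), Real.exp (-t) / t)
      - ξ / (ξ * mx - my)
        * (mx * (Real.log mx - Real.eulerMascheroniConstant)
          - my / ξ * (Real.log (my / ξ) - Real.eulerMascheroniConstant)) := by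
  have hX' : HasLaw X (expMeasure (1 / mx)) μ := ⟨hXm.aemeasurable, hX⟩
  have hY' : HasLaw Y (expMeasure (1 / my)) μ := ⟨hYm.aemeasurable, hY⟩
  simp only [mul_right_comm ρ (X _) (Y _)]
  rw [integral_log_mul_mul_div_add_of_hasLaw_exp (by positivity) hmx hmy hβ hX' hY',
    integral_log_mul_mul_div_add_of_hasLaw_exp hρ hmy hmx hβ hY' hX',
    integral_log_mul_linear_of_indepFun_exp hξ hρ hmx hmy hne hX' hY' hindep, mul_comm my mx]
  ring
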